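/- Let 𝕏 be a σ-finite measure space and ℳ, 𝒩, 𝒬 Banach L^0(𝕏)-modules. For every b ∈ B(ℳ,𝒩;𝒬) there exists a unique b̃_π ∈ Hom(ℳ ⊗̂_π 𝒩; 𝒬) such that b̃_π(v ⊗ w) = b(v,w) for all v ∈ ℳ and w ∈ 𝒩; moreover, the map b ↦ b̃_π is an isomorphism of Banach L^0(𝕏)-modules from B(ℳ,𝒩;𝒬) onto Hom(ℳ ⊗̂_π 𝒩; 𝒬). In particular, taking 𝒬 = L^0(𝕏), the dual (ℳ ⊗̂_π 𝒩)* is isomorphic as a Banach L^0(𝕏)-module to B(ℳ,𝒩). -/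

import Mathlib

/-!
If `g` bounds `b` and `α = ∑ vᵢ ⊗ wᵢ`, then `|∑ b(vᵢ, wᵢ)| ≤ g ∑ |vᵢ||wᵢ|`. Multiplication by
`g ≥ 0` commutes with infima in `L⁰(𝕏)`, so the infimum over all representations of `α` shows that
the algebraic linearisation of `b` is bounded by `g |α|_π`. It therefore extends by continuity from
the dense image of `ℳ ⊗ 𝒩`, uniquely and with the same bound `g`. Conversely, `|v ⊗ w|_π ≤ |v||w|`
makes every bound of a homomorphism a bound of its restriction to elementary tensors.

The density arguments take place in normed groups: `‖f‖ = d_{L⁰}(f, 0)` is a complete group norm on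
`L⁰(𝕏)`, and `‖v‖ = ‖|v|‖` is one on each Banach `L⁰(𝕏)`-module. Multiplication by a fixed `g` is
not Lipschitz for the first of them, but it is continuous because convergent sequences have
a.e. convergent subsequences.
-/

open MeasureTheory Filter Set TensorProduct

noncomputable section

namespace Paper

variable {X : Type*} [MeasurableSpace X]

/-- The space `L⁰(𝕏)` of real-valued measurable functions up to `μ`-a.e. equality. -/
abbrev L0 (μ : Measure X) : Type _ := X →ₘ[μ] ℝ

instance (μ : Measure X) : CommRing (L0 μ) :=
  { (inferInstance : AddCommGroup (L0 μ)), (inferInstance : CommMonoid (L0 μ)) with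
    left_distrib := fun a b c => AEEqFun.toGerm_injective <| by
      simp only [AEEqFun.mul_toGerm, AEEqFun.add_toGerm, mul_add]
    right_distrib := fun a b c => AEEqFun.toGerm_injective <| by
      simp only [AEEqFun.mul_toGerm, AEEqFun.add_toGerm, add_mul]
    zero_mul := fun a => AEEqFun.toGerm_injective <| by
      simp only [AEEqFun.mul_toGerm, AEEqFun.zero_toGerm, zero_mul]
    mul_zero := fun a => AEEqFun.toGerm_injective <| by
      simp only [AEEqFun.mul_toGerm, AEEqFun.zero_toGerm, mul_zero] }

/-- The distance on `L⁰(𝕏)` inducing the topology of convergence in measure, defined through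
the auxiliary finite measure `μ.toFinite` (which satisfies `μ ≪ μ.toFinite ≪ μ`). -/
noncomputable def dL0 (μ : Measure X) [SFinite μ] (f g : L0 μ) : ℝ :=
  ∫ x, min |f x - g x| 1 ∂(μ.toFinite)

/-- A Banach `L⁰(𝕏)`-module: a module over `L⁰(𝕏)` endowed with a pointwise norm, complete
with respect to the induced distance. -/
class BanachMod (μ : Measure X) [SFinite μ] (M : Type*) [AddCommGroup M]
    [Module (L0 μ) M] where
  pn : M → L0 μ
  pn_nonneg : ∀ v : M, 0 ≤ pn v
  pn_eq_zero : ∀ v : M, pn v = 0 ↔ v = 0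
  pn_add_le : ∀ v w : M, pn (v + w) ≤ pn v + pn w
  pn_smul : ∀ (f : L0 μ) (v : M), pn (f • v) = |f| * pn v
  complete : ∀ u : ℕ → M,
    (∀ ε : ℝ, 0 < ε → ∃ N : ℕ, ∀ m ≥ N, ∀ n ≥ N, dL0 μ (pn (u m - u n)) 0 < ε) →
    ∃ v : M, Tendsto (fun n => dL0 μ (pn (u n - v)) 0) atTop (nhds 0)

/-- The pointwise norm of a Banach `L⁰(𝕏)`-module, with the measure explicit. -/
noncomputable def pn (μ : Measure X) [SFinite μ] {M : Type*} [AddCommGroup M]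
    [Module (L0 μ) M] [BanachMod μ M] (v : M) : L0 μ :=
  BanachMod.pn v

/-- The distance on a Banach `L⁰(𝕏)`-module. -/
noncomputable def dM (μ : Measure X) [SFinite μ] {M : Type*} [AddCommGroup M]
    [Module (L0 μ) M] [BanachMod μ M] (v w : M) : ℝ :=
  dL0 μ (pn μ (v - w)) 0

section Defs

variable (μ : Measure X) [SFinite μ]
variable {M N : Type*} [AddCommGroup M] [Module (L0 μ) M] [BanachMod μ M]
  [AddCommGroup N] [Module (L0 μ) N] [BanachMod μ N]

/-- The set of admissible bounds of a map between Banach `L⁰(𝕏)`-modules; the pointwise norm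
`|T|` of a homomorphism is the infimum of this set. -/
def homBddSet (T : M → N) : Set (L0 μ) :=
  {g | 0 ≤ g ∧ ∀ v, pn μ (T v) ≤ g * pn μ v}

/-- A homomorphism of Banach `L⁰(𝕏)`-modules: an `L⁰(𝕏)`-linear map admitting a bound
`g ∈ L⁰(𝕏)⁺` with `|T v| ≤ g |v|` (equivalently, `L⁰(𝕏)`-linear and continuous). -/
def IsHom (T : M →ₗ[L0 μ] N) : Prop :=
  ∃ g, g ∈ homBddSet μ (⇑T)

/-- The set of admissible bounds of an `L⁰(𝕏)`-valued map (for elements of the dual module). -/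
def dualBddSet (ω : M → L0 μ) : Set (L0 μ) :=
  {g | 0 ≤ g ∧ ∀ v, |ω v| ≤ g * pn μ v}

/-- Membership in the dual module `ℳ*`: an `L⁰(𝕏)`-linear map `ω : ℳ → L⁰(𝕏)` admitting a
bound `g ∈ L⁰(𝕏)⁺` with `|ω v| ≤ g |v|`. -/
def IsDual (ω : M →ₗ[L0 μ] L0 μ) : Prop :=
  ∃ g, g ∈ dualBddSet μ (⇑ω)

/-- Membership in the unit disc `𝔻_{ℳ*}` of the dual module: `|ω| ≤ 1`, equivalently
`|ω v| ≤ |v|` for every `v`. -/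
def InDualDisc (ω : M →ₗ[L0 μ] L0 μ) : Prop :=
  ∀ v, |ω v| ≤ pn μ v

/-- The family of pointwise norms `|s - ∑_{i ∈ F ∪ G} v i|` for `G` finite disjoint from `F`,
whose `F`-indexed inf-sup being `0` defines `s = ∑_{i∈I} v i`. -/
def sumUB {I : Type*} (v : I → M) (s : M) (F : Finset I) : Set (L0 μ) :=
  {g | ∃ G : Finset I, Disjoint G F ∧ g = pn μ (s - (∑ i ∈ F, v i + ∑ i ∈ G, v i))}

/-- `HasSumMod μ v s` means that the family `{v_i}` is summable in the Banach `L⁰(𝕏)`-module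
with sum `s`, i.e. `⋀_F ⋁_G |s - ∑_{i ∈ F ∪ G} v_i| = 0` (the inner suprema being the values
of `b`, and the outer infimum being `0`). -/
def HasSumMod {I : Type*} (v : I → M) (s : M) : Prop :=
  ∃ b : Finset I → L0 μ, (∀ F, IsLUB (sumUB μ v s F) (b F)) ∧ IsGLB (Set.range b) 0

/-- A family in a Banach `L⁰(𝕏)`-module is summable if it has a sum. -/
def SummableMod {I : Type*} (v : I → M) : Prop :=
  ∃ s, HasSumMod μ v s

/-- The partial sums `∑_{i ∈ F} |v i|` of the pointwise norms of a family; the element `|v|₁`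
of `ℓ₁(I, ℳ)` is the supremum of this set. -/
def l1PartialSums {I : Type*} (v : I → M) : Set (L0 μ) :=
  {g | ∃ F : Finset I, g = ∑ i ∈ F, pn μ (v i)}

/-- Membership in `ℓ₁(I, ℳ)`: the partial sums of the pointwise norms admit a supremum
(equivalently, an upper bound) in `L⁰(𝕏)`. -/
def Meml1 {I : Type*} (v : I → M) : Prop :=
  ∃ b, IsLUB (l1PartialSums μ v) b

/-- The partial sums `∑_{i ∈ F} |v i|` for an `L⁰(𝕏)`-valued family. -/
def l1PartialSumsF {I : Type*} (v : I → L0 μ) : Set (L0 μ) :=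
  {g | ∃ F : Finset I, g = ∑ i ∈ F, |v i|}

/-- Membership in `ℓ₁(I, L⁰(𝕏))`. -/
def Meml1F {I : Type*} (v : I → L0 μ) : Prop :=
  ∃ b, IsLUB (l1PartialSumsF μ v) b

/-- The set whose infimum defines the projective pointwise norm: all values
`∑_{i=1}^n |v_i||w_i|` over representations `α = ∑_{i=1}^n v_i ⊗ w_i`. -/
def piReps (α : M ⊗[L0 μ] N) : Set (L0 μ) :=
  {g | ∃ (n : ℕ) (v : Fin n → M) (w : Fin n → N),
    α = ∑ i, v i ⊗ₜ[L0 μ] w i ∧ g = ∑ i, pn μ (v i) * pn μ (w i)}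

/-- The set whose supremum defines the injective pointwise norm: all values
`|∑_{i=1}^n ω(v_i) η(w_i)|` over representations `α = ∑_{i=1}^n v_i ⊗ w_i` and elements
`ω ∈ 𝔻_{ℳ*}`, `η ∈ 𝔻_{𝒩*}`. -/
def epsReps (α : M ⊗[L0 μ] N) : Set (L0 μ) :=
  {g | ∃ (n : ℕ) (v : Fin n → M) (w : Fin n → N)
    (ω : M →ₗ[L0 μ] L0 μ) (η : N →ₗ[L0 μ] L0 μ), InDualDisc μ ω ∧ InDualDisc μ η ∧
    α = ∑ i, v i ⊗ₜ[L0 μ] w i ∧ g = |∑ i, ω (v i) * η (w i)|}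

/-- `IsPiTensor μ M N P e` states that the Banach `L⁰(𝕏)`-module `P`, together with the
`L⁰(𝕏)`-linear map `e` defined on the algebraic tensor product, realizes the projective
tensor product `ℳ ⊗̂_π 𝒩`: the pointwise norm of `e α` is the projective pointwise norm
`|α|_π` and the image of `e` is dense. -/
structure IsPiTensor (M N P : Type*) [AddCommGroup M] [Module (L0 μ) M] [BanachMod μ M]
    [AddCommGroup N] [Module (L0 μ) N] [BanachMod μ N]
    [AddCommGroup P] [Module (L0 μ) P] [BanachMod μ P]
    (e : M ⊗[L0 μ] N →ₗ[L0 μ] P) : Prop where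
  pn_emb : ∀ α : M ⊗[L0 μ] N, IsGLB (piReps μ α) (pn μ (e α))
  dense : ∀ p : P, ∀ ε : ℝ, 0 < ε → ∃ α : M ⊗[L0 μ] N, dM μ (e α) p < ε

/-- `IsEpsTensor μ M N P e` states that the Banach `L⁰(𝕏)`-module `P`, together with the
`L⁰(𝕏)`-linear map `e` defined on the algebraic tensor product, realizes the injective
tensor product `ℳ ⊗̂_ε 𝒩`: the pointwise norm of `e α` is the injective pointwise norm
`|α|_ε` and the image of `e` is dense. -/
structure IsEpsTensor (M N P : Type*) [AddCommGroup M] [Module (L0 μ) M] [BanachMod μ M]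
    [AddCommGroup N] [Module (L0 μ) N] [BanachMod μ N]
    [AddCommGroup P] [Module (L0 μ) P] [BanachMod μ P]
    (e : M ⊗[L0 μ] N →ₗ[L0 μ] P) : Prop where
  pn_emb : ∀ α : M ⊗[L0 μ] N, IsLUB (epsReps μ α) (pn μ (e α))
  dense : ∀ p : P, ∀ ε : ℝ, 0 < ε → ∃ α : M ⊗[L0 μ] N, dM μ (e α) p < ε

end Defs

/-- The set of admissible bounds of a bilinear map `b : ℳ × 𝒩 → 𝒬`; the pointwise norm
`|b|` is its infimum. -/
def bilinBddSet (μ : Measure X) [SFinite μ] {M N Q : Type*} [AddCommGroup M] [Module (L0 μ) M]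
    [BanachMod μ M] [AddCommGroup N] [Module (L0 μ) N] [BanachMod μ N] [AddCommGroup Q]
    [Module (L0 μ) Q] [BanachMod μ Q] (b : M →ₗ[L0 μ] N →ₗ[L0 μ] Q) : Set (L0 μ) :=
  {g | 0 ≤ g ∧ ∀ (v : M) (w : N), pn μ (b v w) ≤ g * pn μ v * pn μ w}

/-- Membership in `B(ℳ,𝒩;𝒬)`: an `L⁰(𝕏)`-bilinear continuous map, i.e. one admitting a
bound `g ∈ L⁰(𝕏)⁺` with `|b(v,w)| ≤ g |v||w|`. -/
def IsBddBilin (μ : Measure X) [SFinite μ] {M N Q : Type*} [AddCommGroup M] [Module (L0 μ) M]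
    [BanachMod μ M] [AddCommGroup N] [Module (L0 μ) N] [BanachMod μ N] [AddCommGroup Q]
    [Module (L0 μ) Q] [BanachMod μ Q] (b : M →ₗ[L0 μ] N →ₗ[L0 μ] Q) : Prop :=
  ∃ g, g ∈ bilinBddSet μ b

/-- The set of admissible bounds of an `L⁰(𝕏)`-valued bilinear map. -/
def bilinBddSetF (μ : Measure X) [SFinite μ] {M N : Type*} [AddCommGroup M] [Module (L0 μ) M]
    [BanachMod μ M] [AddCommGroup N] [Module (L0 μ) N] [BanachMod μ N]
    (b : M →ₗ[L0 μ] N →ₗ[L0 μ] L0 μ) : Set (L0 μ) :=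
  {g | 0 ≤ g ∧ ∀ (v : M) (w : N), |b v w| ≤ g * pn μ v * pn μ w}

/-- Membership in `B(ℳ,𝒩) = B(ℳ,𝒩;L⁰(𝕏))`. -/
def IsBddBilinF (μ : Measure X) [SFinite μ] {M N : Type*} [AddCommGroup M] [Module (L0 μ) M]
    [BanachMod μ M] [AddCommGroup N] [Module (L0 μ) N] [BanachMod μ N]
    (b : M →ₗ[L0 μ] N →ₗ[L0 μ] L0 μ) : Prop :=
  ∃ g, g ∈ bilinBddSetF μ b

open scoped Topology

namespace L0

section Order

variable {μ : Measure X}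

instance : IsOrderedRing (L0 μ) :=
  Function.Injective.isOrderedRing AEEqFun.toGerm AEEqFun.zero_toGerm AEEqFun.one_toGerm
    AEEqFun.add_toGerm AEEqFun.mul_toGerm Iff.rfl

theorem abs_mul (f g : L0 μ) : |f * g| = |f| * |g| := by
  apply AEEqFun.ext
  filter_upwards [AEEqFun.coeFn_abs (f * g), AEEqFun.coeFn_mul f g, AEEqFun.coeFn_abs f,
    AEEqFun.coeFn_abs g, AEEqFun.coeFn_mul |f| |g|] with x h1 h2 h3 h4 h5
  simp [h1, h2, h3, h4, h5, _root_.abs_mul]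

theorem nonneg_iff_ae {f : L0 μ} : 0 ≤ f ↔ ∀ᵐ x ∂μ, 0 ≤ f x := by
  rw [← AEEqFun.coeFn_le]
  refine eventually_congr ?_
  filter_upwards [AEEqFun.coeFn_zero (μ := μ) (β := ℝ)] with x h0
  rw [h0, Pi.zero_apply]

theorem exists_nonneg_mul_eq_one {f : L0 μ} (hf : ∀ᵐ x ∂μ, 0 < f x) :
    ∃ r : L0 μ, 0 ≤ r ∧ f * r = 1 := by
  have hr := AEEqFun.coeFn_compMeasurable (·⁻¹) measurable_inv f
  refine ⟨AEEqFun.compMeasurable (·⁻¹) measurable_inv f, ?_, ?_⟩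
  · refine nonneg_iff_ae.2 ?_
    filter_upwards [hf, hr] with x hx h
    rw [h]
    exact inv_nonneg.2 hx.le
  · apply AEEqFun.ext
    filter_upwards [hf, hr, AEEqFun.coeFn_mul f (AEEqFun.compMeasurable (·⁻¹) measurable_inv f),
      AEEqFun.coeFn_one (μ := μ) (β := ℝ)] with x hx h hmul h1
    rw [hmul, h1, Pi.mul_apply, h]
    exact mul_inv_cancel₀ hx.ne'

theorem le_mul_of_isGLB_of_pos {S : Set (L0 μ)} {a c f : L0 μ} (ha : IsGLB S a)
    (hf : ∀ᵐ x ∂μ, 0 < f x) (hc : ∀ s ∈ S, c ≤ f * s) : c ≤ f * a := by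
  obtain ⟨r, hr, hfr⟩ := exists_nonneg_mul_eq_one hf
  have hf0 : 0 ≤ f := nonneg_iff_ae.2 (hf.mono fun _ => le_of_lt)
  have hrc : r * c ≤ a := ha.2 fun s hs => calc
    r * c ≤ r * (f * s) := mul_le_mul_of_nonneg_left (hc s hs) hr
    _ = s := by rw [← mul_assoc, mul_comm r, hfr, one_mul]
  calc
    c = f * (r * c) := by rw [← mul_assoc, hfr, one_mul]
    _ ≤ f * a := mul_le_mul_of_nonneg_left hrc hf0

theorem coeFn_sum_range (f : ℕ → L0 μ) (n : ℕ) :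
    ⇑(∑ k ∈ Finset.range n, f k) =ᵐ[μ] fun x => ∑ k ∈ Finset.range n, f k x := by
  induction n with
  | zero => exact AEEqFun.coeFn_zero
  | succ n ih =>
    simp only [Finset.sum_range_succ]
    exact (AEEqFun.coeFn_add _ _).trans (ih.add .rfl)

end Order

section Norm

variable {μ : Measure X} [SFinite μ]

theorem integrable_min_abs_one (f : L0 μ) :
    Integrable (fun x => min |f x| 1) μ.toFinite := by
  refine Integrable.of_bound (C := 1) ?_ (Eventually.of_forall fun x => ?_)
  · exact ((continuous_abs.min continuous_const).comp_stronglyMeasurable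
      f.stronglyMeasurable).aestronglyMeasurable
  · rw [Real.norm_of_nonneg (by positivity)]
    exact min_le_right _ _

theorem dL0_zero_right (f : L0 μ) : dL0 μ f 0 = ∫ x, min |f x| 1 ∂μ.toFinite := by
  refine integral_congr_ae ?_
  filter_upwards [(toFinite_absolutelyContinuous μ).ae_le
    (AEEqFun.coeFn_zero (μ := μ) (β := ℝ))] with x hx
  simp [hx]

theorem dL0_le_of_abs_le {f g : L0 μ} (h : |f| ≤ |g|) : dL0 μ f 0 ≤ dL0 μ g 0 := by
  rw [dL0_zero_right, dL0_zero_right]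
  refine integral_mono_ae (integrable_min_abs_one f) (integrable_min_abs_one g) ?_
  refine (toFinite_absolutelyContinuous μ).ae_le ?_
  filter_upwards [AEEqFun.coeFn_le.2 h, AEEqFun.coeFn_abs f, AEEqFun.coeFn_abs g] with x hx hf hg
  rw [hf, hg] at hx
  exact min_le_min_right _ hx

theorem dL0_add_le (f g : L0 μ) : dL0 μ (f + g) 0 ≤ dL0 μ f 0 + dL0 μ g 0 := by
  rw [dL0_zero_right, dL0_zero_right, dL0_zero_right,
    ← integral_add (integrable_min_abs_one f) (integrable_min_abs_one g)]
  refine integral_mono_ae (integrable_min_abs_one _)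
    ((integrable_min_abs_one f).add (integrable_min_abs_one g)) ?_
  filter_upwards [(toFinite_absolutelyContinuous μ).ae_le (AEEqFun.coeFn_add f g)] with x h
  rw [h]
  change min |f x + g x| 1 ≤ min |f x| 1 + min |g x| 1
  have := abs_add_le (f x) (g x)
  grind

theorem eq_zero_of_dL0_eq_zero {f : L0 μ} (h : dL0 μ f 0 = 0) : f = 0 := by
  rw [dL0_zero_right, integral_eq_zero_iff_of_nonneg (fun x => by positivity)
    (integrable_min_abs_one f)] at h
  apply AEEqFun.ext
  filter_upwards [(absolutelyContinuous_toFinite μ).ae_le h,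
    AEEqFun.coeFn_zero (μ := μ) (β := ℝ)] with x hx h0
  rw [h0]
  exact abs_eq_zero.1 ((min_eq_iff.1 hx).resolve_right fun h => one_ne_zero h.1).1

/-- The group norm `‖f‖ = d_{L⁰}(f, 0)` on `L⁰(𝕏)`, which makes convergence in the distance of
`L⁰(𝕏)` convergence in a normed group. -/
scoped instance : NormedAddCommGroup (L0 μ) :=
  AddGroupNorm.toNormedAddCommGroup
    { toFun f := dL0 μ f 0
      map_zero' := by simp [dL0]
      add_le' := dL0_add_le
      neg' f := (dL0_le_of_abs_le (abs_neg f).le).antisymm (dL0_le_of_abs_le (abs_neg f).ge)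
      eq_zero_of_map_eq_zero' _ := eq_zero_of_dL0_eq_zero }

theorem norm_def (f : L0 μ) : ‖f‖ = ∫ x, min |f x| 1 ∂μ.toFinite :=
  dL0_zero_right f

scoped instance : HasSolidNorm (L0 μ) where
  solid _ _ := dL0_le_of_abs_le

theorem tendsto_of_ae {f : ℕ → L0 μ} {g : L0 μ}
    (h : ∀ᵐ x ∂μ, Tendsto (fun n => f n x) atTop (𝓝 (g x))) : Tendsto f atTop (𝓝 g) := by
  rw [tendsto_iff_norm_sub_tendsto_zero]
  simp only [norm_def]
  suffices Tendsto (fun n => ∫ x, min |(f n - g) x| 1 ∂μ.toFinite) atTop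
      (𝓝 (∫ _, (0 : ℝ) ∂μ.toFinite)) by simpa using this
  refine tendsto_integral_of_dominated_convergence (fun _ => 1)
    (fun n => (integrable_min_abs_one (f n - g)).aestronglyMeasurable) (integrable_const 1)
    (fun n => Eventually.of_forall fun x => ?_) ((toFinite_absolutelyContinuous μ).ae_le ?_)
  · rw [Real.norm_of_nonneg (by positivity)]
    exact min_le_right _ _
  · filter_upwards [h, ae_all_iff.2 fun n => AEEqFun.coeFn_sub (f n) g] with x hx hsub
    simp only [hsub, Pi.sub_apply]
    simpa using ((hx.sub_const (g x)).abs.min (tendsto_const_nhds (x := (1 : ℝ))))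

-- A summable series of truncations `min |f k x| 1` has terms eventually below `1`, where the
-- truncation is inactive.
theorem ae_summable_abs_of_summable_norm {f : ℕ → L0 μ} (h : Summable fun k => ‖f k‖) :
    ∀ᵐ x ∂μ, Summable fun k => |f k x| := by
  have htrunc : ∀ᵐ x ∂μ.toFinite, Summable fun k => ‖min |f k x| 1‖ := by
    refine summable_norm_of_tsum_eLpNorm_ne_top le_rfl
      (fun k => (integrable_min_abs_one (f k)).aestronglyMeasurable) ?_
    have hnorm (k : ℕ) : eLpNorm (fun x => min |f k x| 1) 1 μ.toFinite = ENNReal.ofReal ‖f k‖ := by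
      rw [norm_def, eLpNorm_one_eq_lintegral_enorm,
        ← ofReal_integral_norm_eq_lintegral_enorm (integrable_min_abs_one (f k))]
      congr! 3 with x
      exact Real.norm_of_nonneg (by positivity)
    simp_rw [hnorm]
    exact h.tsum_ofReal_ne_top
  filter_upwards [(absolutelyContinuous_toFinite μ).ae_le htrunc] with x hx
  refine (summable_congr_atTop ?_).1 hx
  filter_upwards [hx.tendsto_atTop_zero.eventually_lt_const one_pos] with k hk
  rw [Real.norm_of_nonneg (by positivity)] at hk ⊢
  exact min_eq_left ((min_lt_iff.1 hk).resolve_right (lt_irrefl 1)).le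

theorem exists_subseq_tendsto_ae {f : ℕ → L0 μ} {g : L0 μ} (h : Tendsto f atTop (𝓝 g)) :
    ∃ φ : ℕ → ℕ, StrictMono φ ∧ ∀ᵐ x ∂μ, Tendsto (fun n => f (φ n) x) atTop (𝓝 (g x)) := by
  rw [tendsto_iff_norm_sub_tendsto_zero] at h
  obtain ⟨φ, hφ, hlt⟩ := extraction_forall_of_eventually
    (P := fun n k => ‖f k - g‖ < (1 / 2) ^ n) fun n => h.eventually_lt_const (by positivity)
  have hsum : Summable fun n => ‖f (φ n) - g‖ :=
    .of_nonneg_of_le (fun _ => norm_nonneg _) (fun n => (hlt n).le) summable_geometric_two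
  refine ⟨φ, hφ, ?_⟩
  filter_upwards [ae_summable_abs_of_summable_norm hsum,
    ae_all_iff.2 fun n => AEEqFun.coeFn_sub (f (φ n)) g] with x hx hsub
  simp only [hsub, Pi.sub_apply] at hx
  exact tendsto_iff_norm_sub_tendsto_zero.2 hx.tendsto_atTop_zero

scoped instance : CompleteSpace (L0 μ) := by
  refine NormedAddCommGroup.completeSpace_of_summable_imp_tendsto fun f hf => ?_
  have hlim : ∀ᵐ x ∂μ, Tendsto (fun n => (∑ k ∈ Finset.range n, f k : L0 μ) x) atTop
      (𝓝 (∑' k, f k x)) := by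
    filter_upwards [ae_summable_abs_of_summable_norm hf, ae_all_iff.2 (coeFn_sum_range f)]
      with x hx hsum
    simp only [hsum]
    exact hx.of_abs.hasSum.tendsto_sum_nat
  have hmeas : AEStronglyMeasurable (fun x => ∑' k, f k x) μ :=
    aestronglyMeasurable_of_tendsto_ae atTop (fun n => AEEqFun.aestronglyMeasurable _) hlim
  refine ⟨AEEqFun.mk _ hmeas, tendsto_of_ae ?_⟩
  filter_upwards [hlim, AEEqFun.coeFn_mk _ hmeas] with x hx hmk
  rwa [hmk]

theorem continuous_mul_left (g : L0 μ) : Continuous fun f : L0 μ => g * f := by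
  refine continuous_iff_seqContinuous.2 fun f a hf => tendsto_of_subseq_tendsto fun ns hns => ?_
  obtain ⟨φ, -, hφ⟩ := exists_subseq_tendsto_ae (hf.comp hns)
  refine ⟨φ, tendsto_of_ae ?_⟩
  filter_upwards [hφ, ae_all_iff.2 fun n => AEEqFun.coeFn_mul g (f (ns (φ n))),
    AEEqFun.coeFn_mul g a] with x hx hmul hmul'
  simp only [Function.comp_apply, hmul, hmul', Pi.mul_apply]
  exact hx.const_mul (g x)

scoped instance : SeparatelyContinuousMul (L0 μ) where
  continuous_const_mul {g} := continuous_mul_left g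
  continuous_mul_const {g} := by simpa only [mul_comm g] using continuous_mul_left g

-- Where `g` vanishes it cannot be inverted, but `g + ε` can; then let `ε → 0`.
theorem le_mul_of_isGLB {S : Set (L0 μ)} {a c g : L0 μ} (ha : IsGLB S a) (hg : 0 ≤ g)
    (hS : ∀ s ∈ S, 0 ≤ s) (hc : ∀ s ∈ S, c ≤ g * s) : c ≤ g * a := by
  let ε (n : ℕ) : L0 μ := AEEqFun.const X (1 / ((n : ℝ) + 1))
  have coeFn_ε (n : ℕ) : ∀ᵐ x ∂μ, ε n x = 1 / ((n : ℝ) + 1) := AEEqFun.coeFn_const X _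
  have ε_nonneg (n : ℕ) : 0 ≤ ε n :=
    nonneg_iff_ae.2 ((coeFn_ε n).mono fun _ hε => hε ▸ Nat.one_div_pos_of_nat.le)
  have tendsto_ε : Tendsto ε atTop (𝓝 0) := by
    refine tendsto_of_ae ?_
    filter_upwards [ae_all_iff.2 coeFn_ε, AEEqFun.coeFn_zero (μ := μ) (β := ℝ)] with x hε h0
    simp only [hε, h0]
    exact tendsto_one_div_add_atTop_nhds_zero_nat
  have pos (n : ℕ) : ∀ᵐ x ∂μ, 0 < (g + ε n) x := by
    filter_upwards [AEEqFun.coeFn_add g (ε n), coeFn_ε n, nonneg_iff_ae.1 hg] with x hadd hε hg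
    rw [hadd, Pi.add_apply, hε]
    exact add_pos_of_nonneg_of_pos hg Nat.one_div_pos_of_nat
  have hlim : Tendsto (fun n => (g + ε n) * a) atTop (𝓝 (g * a)) := by
    simpa using (tendsto_ε.const_add g).mul_const a
  refine ge_of_tendsto' hlim fun n => le_mul_of_isGLB_of_pos ha (pos n) fun s hs => ?_
  exact (hc s hs).trans
    (mul_le_mul_of_nonneg_right (le_add_of_nonneg_right (ε_nonneg n)) (hS s hs))

end Norm

end L0

section PointwiseNorm

variable {μ : Measure X} [SFinite μ]
variable {M : Type*} [AddCommGroup M] [Module (L0 μ) M] [BanachMod μ M]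

theorem pn_nonneg (v : M) : 0 ≤ pn μ v := BanachMod.pn_nonneg v

theorem pn_eq_zero {v : M} : pn μ v = 0 ↔ v = 0 := BanachMod.pn_eq_zero v

theorem pn_add_le (v w : M) : pn μ (v + w) ≤ pn μ v + pn μ w := BanachMod.pn_add_le v w

theorem pn_smul (f : L0 μ) (v : M) : pn μ (f • v) = |f| * pn μ v := BanachMod.pn_smul f v

theorem pn_zero : pn μ (0 : M) = 0 := pn_eq_zero.2 rfl

theorem pn_neg (v : M) : pn μ (-v) = pn μ v := by
  simpa [abs_of_nonneg (zero_le_one (α := L0 μ))] using pn_smul (-1 : L0 μ) v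

theorem pn_sum_le {ι : Type*} (s : Finset ι) (v : ι → M) :
    pn μ (∑ i ∈ s, v i) ≤ ∑ i ∈ s, pn μ (v i) :=
  Finset.le_sum_of_subadditive (pn μ) pn_zero.le pn_add_le s v

theorem abs_pn_sub_pn_le (v w : M) : |pn μ v - pn μ w| ≤ pn μ (v - w) := by
  have hle (v w : M) : pn μ v - pn μ w ≤ pn μ (v - w) := by
    simpa [sub_le_iff_le_add] using pn_add_le (v - w) w
  refine abs_le'.2 ⟨hle v w, ?_⟩
  rw [neg_sub, ← pn_neg (v - w), neg_sub]
  exact hle w v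

end PointwiseNorm

section Topology

open scoped L0

/-- The group norm `‖v‖ = d_{L⁰}(|v|, 0)` of a Banach `L⁰(𝕏)`-module, whose distance is `dM μ`.
It is not an instance, since `M` does not determine `μ`. -/
abbrev pnNormedAddCommGroup (μ : Measure X) [SFinite μ] (M : Type*) [AddCommGroup M]
    [Module (L0 μ) M] [BanachMod μ M] : NormedAddCommGroup M :=
  AddGroupNorm.toNormedAddCommGroup
    { toFun v := ‖pn μ v‖
      map_zero' := by rw [pn_zero, norm_zero]
      add_le' v w := (norm_le_norm_of_abs_le_abs (abs_le_abs_of_nonneg (pn_nonneg _)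
        (pn_add_le v w))).trans (norm_add_le _ _)
      neg' v := by rw [pn_neg]
      eq_zero_of_map_eq_zero' v hv := pn_eq_zero.1 (norm_eq_zero.1 hv) }

/-- The norm of the normed group `M` is the one defined by its pointwise norm, so that its
topology is that of the Banach `L⁰(𝕏)`-module `M`. -/
class HasPnNorm (μ : Measure X) [SFinite μ] (M : Type*) [NormedAddCommGroup M]
    [Module (L0 μ) M] [BanachMod μ M] : Prop where
  norm_pn : ∀ v : M, ‖pn μ v‖ = ‖v‖

theorem hasPnNorm_pnNormedAddCommGroup (μ : Measure X) [SFinite μ] (M : Type*) [AddCommGroup M]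
    [Module (L0 μ) M] [BanachMod μ M] :
    letI := pnNormedAddCommGroup μ M
    HasPnNorm μ M :=
  letI := pnNormedAddCommGroup μ M
  ⟨fun _ => rfl⟩

variable {μ : Measure X} [SFinite μ]
variable {P Q : Type*} [NormedAddCommGroup P] [Module (L0 μ) P] [BanachMod μ P] [HasPnNorm μ P]
  [NormedAddCommGroup Q] [Module (L0 μ) Q] [BanachMod μ Q] [HasPnNorm μ Q]

theorem dM_eq_dist (p q : P) : dM μ p q = dist p q :=
  (HasPnNorm.norm_pn (p - q)).trans (dist_eq_norm p q).symm

theorem continuous_pn : Continuous (pn μ : P → L0 μ) := by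
  refine (LipschitzWith.mk_one fun p q => ?_).continuous
  rw [dist_eq_norm, ← dM_eq_dist (μ := μ)]
  exact norm_le_norm_of_abs_le_abs ((abs_pn_sub_pn_le p q).trans (le_abs_self _))

theorem HasPnNorm.completeSpace (μ : Measure X) [SFinite μ] (P : Type*) [NormedAddCommGroup P]
    [Module (L0 μ) P] [BanachMod μ P] [HasPnNorm μ P] : CompleteSpace P := by
  refine Metric.complete_of_cauchySeq_tendsto fun u hu => ?_
  obtain ⟨p, hp⟩ := BanachMod.complete (μ := μ) u fun ε hε => by
    obtain ⟨k, hk⟩ := Metric.cauchySeq_iff.1 hu ε hε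
    exact ⟨k, fun m hm n hn => (dM_eq_dist (u m) (u n)).trans_lt (hk m hm n hn)⟩
  refine ⟨p, tendsto_iff_dist_tendsto_zero.2 (hp.congr fun n => ?_)⟩
  exact dM_eq_dist (u n) p

theorem continuous_of_pn_le {A : Type*} [AddGroup A] [TopologicalSpace A] [IsTopologicalAddGroup A]
    (T : A →+ Q) {h : A → L0 μ} (hh : Tendsto h (𝓝 0) (𝓝 0)) (hT : ∀ a, pn μ (T a) ≤ h a) :
    Continuous T := by
  refine continuous_of_continuousAt_zero T ?_
  rw [ContinuousAt, map_zero]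
  refine squeeze_zero_norm (fun a => ?_) (by simpa using hh.norm)
  rw [← HasPnNorm.norm_pn (μ := μ)]
  exact norm_le_norm_of_abs_le_abs (abs_le_abs_of_nonneg (pn_nonneg _) (hT a))

theorem tendsto_mul_pn_zero (g : L0 μ) : Tendsto (fun p : P => g * pn μ p) (𝓝 0) (𝓝 0) := by
  simpa [pn_zero] using (continuous_pn.const_mul g).tendsto (0 : P)

variable (μ P) in
theorem HasPnNorm.continuousConstSMul : ContinuousConstSMul (L0 μ) P where
  continuous_const_smul f := continuous_of_pn_le (DistribSMul.toAddMonoidHom P f)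
    (tendsto_mul_pn_zero |f|) fun p => (pn_smul f p).le

theorem IsHom.continuous {T : P →ₗ[L0 μ] Q} (hT : IsHom μ T) : Continuous T := by
  obtain ⟨g, hg⟩ := hT
  exact continuous_of_pn_le T.toAddMonoidHom (tendsto_mul_pn_zero g) hg.2

theorem IsHom.ext_of_denseRange {A : Type*} {e : A → P} (he : DenseRange e) {S T : P →ₗ[L0 μ] Q}
    (hS : IsHom μ S) (hT : IsHom μ T) (h : ∀ a, S (e a) = T (e a)) : S = T :=
  DFunLike.coe_injective (he.equalizer hS.continuous hT.continuous (funext h))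

theorem exists_hom_extension {A : Type*} [AddCommGroup A] [Module (L0 μ) A] {e : A →ₗ[L0 μ] P}
    (he : DenseRange e) {T : A →ₗ[L0 μ] Q} {g : L0 μ} (hg : 0 ≤ g)
    (hT : ∀ a, pn μ (T a) ≤ g * pn μ (e a)) :
    ∃ B : P →ₗ[L0 μ] Q, g ∈ homBddSet μ ⇑B ∧ ∀ a, B (e a) = T a := by
  let := SeminormedAddCommGroup.induced A P e
  have := HasPnNorm.completeSpace μ Q
  have := HasPnNorm.continuousConstSMul μ P
  have := HasPnNorm.continuousConstSMul μ Q
  have he_ind : IsUniformInducing e := ⟨rfl⟩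
  have he_cont := he_ind.uniformContinuous.continuous
  have hT_cont : Continuous T := continuous_of_pn_le T.toAddMonoidHom
    ((tendsto_mul_pn_zero g).comp (by simpa using he_cont.tendsto 0)) hT
  let B := ContinuousLinearMap.extend ⟨T, hT_cont⟩ ⟨e, he_cont⟩
  have hB (a : A) : B (e a) = T a := ContinuousLinearMap.extend_eq ⟨T, hT_cont⟩ he he_ind a
  refine ⟨B, ⟨hg, fun p => ?_⟩, hB⟩
  refine he.induction_on p (isClosed_le (continuous_pn.comp B.continuous)
    (continuous_pn.const_mul g)) fun a => ?_
  exact (congrArg (pn μ) (hB a)).trans_le (hT a)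

end Topology

section ProjectiveTensor

open scoped L0

/-- `L⁰(𝕏)` as a Banach module over itself, with pointwise norm `|·|`. -/
instance (μ : Measure X) [SFinite μ] : BanachMod μ (L0 μ) where
  pn f := |f|
  pn_nonneg := abs_nonneg
  pn_eq_zero f := by rw [← norm_eq_zero, norm_abs_eq_norm, norm_eq_zero]
  pn_add_le := abs_add_le
  pn_smul := L0.abs_mul
  complete u hu := by
    have norm_abs_sub (f g : L0 μ) : dL0 μ |f - g| 0 = dist f g :=
      (norm_abs_eq_norm (f - g)).trans (dist_eq_norm f g).symm
    simp only [norm_abs_sub] at hu ⊢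
    obtain ⟨f, hf⟩ := cauchySeq_tendsto_of_complete (Metric.cauchySeq_iff.2 hu)
    exact ⟨f, tendsto_iff_dist_tendsto_zero.1 hf⟩

variable {μ : Measure X} [SFinite μ]
variable {M N : Type*} [AddCommGroup M] [Module (L0 μ) M] [BanachMod μ M]
  [AddCommGroup N] [Module (L0 μ) N] [BanachMod μ N]

theorem pn_lift_le_of_mem_piReps {Q : Type*} [AddCommGroup Q] [Module (L0 μ) Q] [BanachMod μ Q]
    {b : M →ₗ[L0 μ] N →ₗ[L0 μ] Q} {g : L0 μ} (hg : g ∈ bilinBddSet μ b) {α : M ⊗[L0 μ] N}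
    {s : L0 μ} (hs : s ∈ piReps μ α) : pn μ (lift b α) ≤ g * s := by
  obtain ⟨n, v, w, rfl, rfl⟩ := hs
  calc
    pn μ (lift b (∑ i, v i ⊗ₜ w i)) = pn μ (∑ i, b (v i) (w i)) := by simp only [map_sum, lift.tmul]
    _ ≤ ∑ i, pn μ (b (v i) (w i)) := pn_sum_le _ _
    _ ≤ ∑ i, g * pn μ (v i) * pn μ (w i) := Finset.sum_le_sum fun i _ => hg.2 (v i) (w i)
    _ = g * ∑ i, pn μ (v i) * pn μ (w i) := by simp only [Finset.mul_sum, mul_assoc]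

theorem nonneg_of_mem_piReps {α : M ⊗[L0 μ] N} {s : L0 μ} (hs : s ∈ piReps μ α) : 0 ≤ s := by
  obtain ⟨n, v, w, -, rfl⟩ := hs
  exact Finset.sum_nonneg fun i _ => mul_nonneg (pn_nonneg _) (pn_nonneg _)

namespace IsPiTensor

section Algebraic

variable {P Q : Type*} [AddCommGroup P] [Module (L0 μ) P] [BanachMod μ P]
  [AddCommGroup Q] [Module (L0 μ) Q] [BanachMod μ Q] {e : M ⊗[L0 μ] N →ₗ[L0 μ] P}

theorem pn_lift_le (hP : IsPiTensor μ M N P e) {b : M →ₗ[L0 μ] N →ₗ[L0 μ] Q} {g : L0 μ}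
    (hg : g ∈ bilinBddSet μ b) (α : M ⊗[L0 μ] N) : pn μ (lift b α) ≤ g * pn μ (e α) :=
  L0.le_mul_of_isGLB (hP.pn_emb α) hg.1 (fun _ => nonneg_of_mem_piReps)
    fun _ => pn_lift_le_of_mem_piReps hg

theorem pn_tmul_le (hP : IsPiTensor μ M N P e) (v : M) (w : N) :
    pn μ (e (v ⊗ₜ w)) ≤ pn μ v * pn μ w :=
  (hP.pn_emb (v ⊗ₜ w)).1 ⟨1, fun _ => v, fun _ => w, by simp, by simp⟩

theorem mem_bilinBddSet (hP : IsPiTensor μ M N P e) {B : P →ₗ[L0 μ] Q}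
    {b : M →ₗ[L0 μ] N →ₗ[L0 μ] Q} (hB : ∀ v w, B (e (v ⊗ₜ w)) = b v w) {g : L0 μ}
    (hg : g ∈ homBddSet μ ⇑B) : g ∈ bilinBddSet μ b := by
  refine ⟨hg.1, fun v w => ?_⟩
  calc
    pn μ (b v w) = pn μ (B (e (v ⊗ₜ w))) := by rw [hB]
    _ ≤ g * pn μ (e (v ⊗ₜ w)) := hg.2 _
    _ ≤ g * (pn μ v * pn μ w) := mul_le_mul_of_nonneg_left (hP.pn_tmul_le v w) hg.1
    _ = g * pn μ v * pn μ w := (mul_assoc _ _ _).symm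

end Algebraic

section Extension

variable {P Q : Type*} [NormedAddCommGroup P] [Module (L0 μ) P] [BanachMod μ P] [HasPnNorm μ P]
  [NormedAddCommGroup Q] [Module (L0 μ) Q] [BanachMod μ Q] [HasPnNorm μ Q]
  {e : M ⊗[L0 μ] N →ₗ[L0 μ] P}

theorem denseRange (hP : IsPiTensor μ M N P e) : DenseRange e := by
  refine Metric.denseRange_iff.2 fun p ε hε => ?_
  obtain ⟨α, hα⟩ := hP.dense p ε hε
  exact ⟨α, by rwa [dist_comm, ← dM_eq_dist (μ := μ)]⟩

theorem hom_ext (hP : IsPiTensor μ M N P e) {S T : P →ₗ[L0 μ] Q} (hS : IsHom μ S)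
    (hT : IsHom μ T) (h : ∀ v w, S (e (v ⊗ₜ w)) = T (e (v ⊗ₜ w))) : S = T :=
  hS.ext_of_denseRange hP.denseRange hT
    (LinearMap.congr_fun (TensorProduct.ext' (g := S ∘ₗ e) (h := T ∘ₗ e) h))

theorem exists_linearisation (hP : IsPiTensor μ M N P e) {b : M →ₗ[L0 μ] N →ₗ[L0 μ] Q} {g : L0 μ}
    (hg : g ∈ bilinBddSet μ b) :
    ∃ B : P →ₗ[L0 μ] Q, g ∈ homBddSet μ ⇑B ∧ ∀ v w, B (e (v ⊗ₜ w)) = b v w := by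
  obtain ⟨B, hgB, hB⟩ := exists_hom_extension hP.denseRange hg.1 (hP.pn_lift_le hg)
  exact ⟨B, hgB, fun v w => (hB _).trans (lift.tmul v w)⟩

end Extension

end IsPiTensor

end ProjectiveTensor

theorem universal_property_projective_general
    (μ : Measure X) [SFinite μ]
    (M : Type*) [AddCommGroup M] [Module (L0 μ) M] [BanachMod μ M]
    (N : Type*) [AddCommGroup N] [Module (L0 μ) N] [BanachMod μ N]
    (Q : Type*) [AddCommGroup Q] [Module (L0 μ) Q] [BanachMod μ Q]
    (P : Type*) [AddCommGroup P] [Module (L0 μ) P] [BanachMod μ P]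
    (e : M ⊗[L0 μ] N →ₗ[L0 μ] P) (hP : IsPiTensor μ M N P e) :
    (∀ b : M →ₗ[L0 μ] N →ₗ[L0 μ] Q, IsBddBilin μ b →
      ∃! B : P →ₗ[L0 μ] Q, IsHom μ B ∧ ∀ v w, B (e (v ⊗ₜ w)) = b v w)
    ∧ (∀ B : P →ₗ[L0 μ] Q, IsHom μ B →
        ∃ b : M →ₗ[L0 μ] N →ₗ[L0 μ] Q, IsBddBilin μ b ∧ ∀ v w, B (e (v ⊗ₜ w)) = b v w)
    ∧ (∀ (b : M →ₗ[L0 μ] N →ₗ[L0 μ] Q) (B : P →ₗ[L0 μ] Q), IsHom μ B →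
        (∀ v w, B (e (v ⊗ₜ w)) = b v w) → bilinBddSet μ b = homBddSet μ ⇑B) := by
  let := pnNormedAddCommGroup μ P
  let := pnNormedAddCommGroup μ Q
  have := hasPnNorm_pnNormedAddCommGroup μ P
  have := hasPnNorm_pnNormedAddCommGroup μ Q
  refine ⟨fun b ⟨g, hg⟩ => ?_, fun B ⟨g, hg⟩ => ?_, fun b B hB hBb => ?_⟩
  · obtain ⟨B, hgB, hB⟩ := hP.exists_linearisation hg
    exact ⟨B, ⟨⟨g, hgB⟩, hB⟩, fun T hT => hP.hom_ext hT.1 ⟨g, hgB⟩ fun v w => by rw [hT.2, hB]⟩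
  · let b := (TensorProduct.mk (L0 μ) M N).compr₂ (B ∘ₗ e)
    exact ⟨b, ⟨g, hP.mem_bilinBddSet (b := b) (fun _ _ => rfl) hg⟩, fun _ _ => rfl⟩
  · refine Set.Subset.antisymm (fun g hg => ?_) fun g => hP.mem_bilinBddSet hBb
    obtain ⟨T, hgT, hT⟩ := hP.exists_linearisation hg
    rwa [hP.hom_ext hB ⟨g, hgT⟩ fun v w => by rw [hBb, hT]]

/-- universal property of the projective tensor product and the dual of
`ℳ ⊗̂_π 𝒩`. For every `b ∈ B(ℳ,𝒩;𝒬)` there is a unique `b̃_π ∈ Hom(ℳ ⊗̂_π 𝒩; 𝒬)` with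
`b̃_π(v ⊗ w) = b(v,w)`; the correspondence `b ↦ b̃_π` is a bijection preserving the sets of
admissible bounds (hence the pointwise norms), i.e. an isomorphism of Banach `L⁰(𝕏)`-modules
`B(ℳ,𝒩;𝒬) ≅ Hom(ℳ ⊗̂_π 𝒩; 𝒬)`. In particular (taking `𝒬 = L⁰(𝕏)`), the dual
`(ℳ ⊗̂_π 𝒩)*` is isomorphic to `B(ℳ,𝒩)`. Here `P` realizes `ℳ ⊗̂_π 𝒩`. -/
theorem universal_property_projective
    (μ : Measure X) [SigmaFinite μ]
    (M : Type*) [AddCommGroup M] [Module (L0 μ) M] [BanachMod μ M]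
    (N : Type*) [AddCommGroup N] [Module (L0 μ) N] [BanachMod μ N]
    (Q : Type*) [AddCommGroup Q] [Module (L0 μ) Q] [BanachMod μ Q]
    (P : Type*) [AddCommGroup P] [Module (L0 μ) P] [BanachMod μ P]
    (e : M ⊗[L0 μ] N →ₗ[L0 μ] P) (hP : IsPiTensor μ M N P e) :
    -- existence and uniqueness of the linearisation `b̃_π`
    (∀ b : M →ₗ[L0 μ] N →ₗ[L0 μ] Q, IsBddBilin μ b →
      ∃! B : P →ₗ[L0 μ] Q, IsHom μ B ∧ ∀ (v : M) (w : N), B (e (v ⊗ₜ[L0 μ] w)) = b v w)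
    -- surjectivity of `b ↦ b̃_π`
    ∧ (∀ B : P →ₗ[L0 μ] Q, IsHom μ B →
        ∃ b : M →ₗ[L0 μ] N →ₗ[L0 μ] Q, IsBddBilin μ b ∧
          ∀ (v : M) (w : N), B (e (v ⊗ₜ[L0 μ] w)) = b v w)
    -- `b ↦ b̃_π` preserves the pointwise norm: `|b̃_π| = |b|`
    ∧ (∀ (b : M →ₗ[L0 μ] N →ₗ[L0 μ] Q) (B : P →ₗ[L0 μ] Q), IsBddBilin μ b → IsHom μ B →
        (∀ (v : M) (w : N), B (e (v ⊗ₜ[L0 μ] w)) = b v w) →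
        ∀ g : L0 μ, g ∈ bilinBddSet μ b ↔ g ∈ homBddSet μ ⇑B)
    -- the particular case `𝒬 = L⁰(𝕏)`: `(ℳ ⊗̂_π 𝒩)* ≅ B(ℳ,𝒩)`
    ∧ (∀ b : M →ₗ[L0 μ] N →ₗ[L0 μ] L0 μ, IsBddBilinF μ b →
        ∃! B : P →ₗ[L0 μ] L0 μ, IsDual μ B ∧ ∀ (v : M) (w : N), B (e (v ⊗ₜ[L0 μ] w)) = b v w)
    ∧ (∀ B : P →ₗ[L0 μ] L0 μ, IsDual μ B →
        ∃ b : M →ₗ[L0 μ] N →ₗ[L0 μ] L0 μ, IsBddBilinF μ b ∧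
          ∀ (v : M) (w : N), B (e (v ⊗ₜ[L0 μ] w)) = b v w)
    ∧ (∀ (b : M →ₗ[L0 μ] N →ₗ[L0 μ] L0 μ) (B : P →ₗ[L0 μ] L0 μ), IsBddBilinF μ b →
        IsDual μ B → (∀ (v : M) (w : N), B (e (v ⊗ₜ[L0 μ] w)) = b v w) →
        ∀ g : L0 μ, g ∈ bilinBddSetF μ b ↔ g ∈ dualBddSet μ ⇑B) := by
  obtain ⟨exQ, surjQ, bddQ⟩ := universal_property_projective_general μ M N Q P e hP
  obtain ⟨exL, surjL, bddL⟩ := universal_property_projective_general μ M N (L0 μ) P e hP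
  exact ⟨exQ, surjQ, fun b B _ hB hBb => Set.ext_iff.1 (bddQ b B hB hBb),
    exL, surjL, fun b B _ hB hBb => Set.ext_iff.1 (bddL b B hB hBb)⟩

end Paper
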